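/- Every d-regular finite simple graph with d ≥ 10^7 is decomposable into 3 locally irregular subgraphs; that is, its edge set E can be partitioned into 3 sets E_1, E_2, E_3 such that each spanning subgraph (V, E_i) is locally irregular. -/

import Mathlib

/-- The degree of a vertex `v` with respect to a set `E'` of edges:
the number of edges of `E'` incident with `v`. -/
noncomputable def edgeDeg {V : Type*} (E' : Set (Sym2 V)) (v : V) : ℕ :=
  {e ∈ E' | v ∈ e}.ncard

/-- A set of edges `E'` induces a locally irregular (spanning) subgraph:
any two vertices joined by an edge of `E'` have distinct degrees w.r.t. `E'`. -/
def LocallyIrregular {V : Type*} (E' : Set (Sym2 V)) : Prop :=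
  ∀ v w : V, s(v, w) ∈ E' → edgeDeg E' v ≠ edgeDeg E' w

namespace LocIrr

/-! ### The label table

Every vertex will get one of 42 labels.  The label `c` has a fine colour `fine c`, and every pair of
labels has a role `role c b`, as seen from `c`:
* `0, 1, 2`: edges between the two label classes get that fixed colour;
* `3`: soft pair, edges get the common fine colour of the two labels;
* `4`: the edge is controlled by its `c`-end, who picks its own fine colour or the colour that is the
  fine colour of neither end;
* `5`: the edge is controlled by its `b`-end. -/

def roleRows : List ℕ := [
  420221020211120111112021211021211011021423,
  220024221022011201410201221120012111032,
  22010022051020224210020211220204012012305,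
  421101010111500100200011111221111041213211,
  25122412121122022011221011222211011431112,
  20020252252222004000202050224200001352010,
  1122040210020111000010041121221013111221,
  22221121210111121225015121211421431015111,
  240022020020000055050220055040000350000000,
  421220020220020111012010101240223011011501,
  201012024202201014220020210221032022011021,
  220202210021020014220251124021302052221212,
  141541110511110000120111110113110011521011,
  12222525225221224515222124231225512222222,
  222005210022052204200050104321022021222220,
  51511511111011210011511413550501411011111,
  21122120222220211210021231021210425411101,
  40111140121121011210020325111121010001222,
  40212100220243011001123011021100040211001,
  20121020112010111212132221421421211021212,
  20211220000022054200311004021200200220050,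
  20051021010001201013021001040002040010012,
  21121110114121221031010111012221420010101,
  24212212202200221300220220241220020002221,
  411151151111511513111511110550551411520511,
  21111020221121131220411111020111421020211,
  41220010201021314222010022220001011001201,
  451020140001243111011203101210010010220020,
  411212212221235221020215221421202012220222,
  20215220000322014210002120021020010214001,
  22142020123011111250020121241120000211111,
  20021022232020021011012221221202211421421,
  121012204321020221210012121024022022211022,
  21021043520020001201000001040050010220250,
  421232135022215124112220521121122225411222,
  20050310200221001210201114241200010250000,
  21023021212420011211112121421220212021001,
  521232432125112214124121121025012222220122,
  21320020001220211210212114024202021011022,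
  43111011102011111510000011221011021041200,
  535222222222214521222225524215202520222202,
  340040050100055005000000000201225200005005]
def loRows : List ℕ := [131809, 141313, 160715, 62112, 161805, 160218, 91615, 122104, 80026,
  111315, 161014, 190811, 22411, 250701, 190414, 12408, 161508, 101811, 81318, 151807, 130520,
  61023, 92110, 220513, 12404, 112108, 131116, 71318, 221105, 130818, 111612, 181210, 191110,
  80623, 191402, 100919, 151510, 191403, 161113, 51915, 260403, 50226]
def hiRows : List ℕ := [132011, 151514, 181117, 82314, 172008, 180822, 111617, 152309, 100634,
  131517, 181214, 211213, 72713, 340908, 210917, 83310, 171711, 121914, 111321, 152009, 150922,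
  91125, 102311, 240614, 123706, 112310, 151217, 101521, 241309, 151119, 141714, 181412, 211310,
  130925, 241708, 121222, 151712, 241707, 181313, 82017, 350610, 70935]

def role (c b : Fin 42) : ℕ := roleRows.getD c.val 0 / 10 ^ b.val % 10

def fine (c : Fin 42) : ℕ := c.val % 3

/-- The colour `i` is possible on a non-soft edge between labels `c` and `b`. -/
def poss (c b : Fin 42) (i : ℕ) : Bool :=
  (role c b == i && decide (i < 3)) ||
  (role c b == 4 && (i == 3 - fine c - fine b || i == fine c)) ||
  (role c b == 5 && (i == 3 - fine c - fine b || i == fine b))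

/-- All edges between labels `c` and `b` have colour `i`. -/
def must (c b : Fin 42) (i : ℕ) : Bool :=
  (role c b == i && decide (i < 3)) || (role c b == 3 && i == fine c)

def loSet (c : Fin 42) (i : ℕ) : Finset (Fin 42) := Finset.univ.filter fun b => must c b i = true
def hiSet (c : Fin 42) (i : ℕ) : Finset (Fin 42) :=
  Finset.univ.filter fun b => (must c b i || poss c b i) = true
def softSet (c : Fin 42) : Finset (Fin 42) := Finset.univ.filter fun b => role c b = 3
def ctlSet (c : Fin 42) : Finset (Fin 42) := Finset.univ.filter fun b => role c b = 4

def loTab (c : Fin 42) (i : ℕ) : ℕ := loRows.getD c.val 0 / 100 ^ i % 100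
def hiTab (c : Fin 42) (i : ℕ) : ℕ := hiRows.getD c.val 0 / 100 ^ i % 100

lemma loSet_card : ∀ (c : Fin 42) (i : Fin 3), (loSet c i).card = loTab c i := by decide +kernel
lemma hiSet_card : ∀ (c : Fin 42) (i : Fin 3), (hiSet c i).card = hiTab c i := by decide +kernel
lemma soft_ctl_card : ∀ c : Fin 42, (softSet c).card + 1 ≤ (ctlSet c).card := by decide +kernel
lemma role_lt : ∀ c b : Fin 42, role c b < 6 := by decide +kernel
lemma role_symm : ∀ c b : Fin 42, role b c =
    if role c b = 4 then 5 else if role c b = 5 then 4 else role c b := by decide +kernel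
lemma role_soft : ∀ c b : Fin 42, role c b = 3 → fine c = fine b := by decide +kernel
lemma role_ctl : ∀ c b : Fin 42, role c b = 4 → fine c ≠ fine b := by decide +kernel
lemma poss_sep : ∀ (c b : Fin 42) (i : Fin 3), poss c b i = true →
    hiTab c i + 1 ≤ loTab b i ∨ hiTab b i + 1 ≤ loTab c i := by decide +kernel

/-! ### A symmetric Lovász local lemma for uniformly random labellings -/

section LLL
open Finset Classical

variable {V L : Type*} [Fintype V] [Fintype L]

/-- The set of labellings `A` only depends on the coordinates in `S`. -/
def DepOn (S : Set V) (A : Set (V → L)) : Prop :=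
  ∀ ω ω' : V → L, (∀ v ∈ S, ω v = ω' v) → (ω ∈ A ↔ ω' ∈ A)

/-- Number of labellings in `A`. -/
noncomputable def cnt (A : Set (V → L)) : ℝ := ((univ.filter fun ω => ω ∈ A).card : ℝ)

lemma cnt_nonneg (A : Set (V → L)) : 0 ≤ cnt A := by unfold cnt; positivity

lemma cnt_mono {A B : Set (V → L)} (h : A ⊆ B) : cnt A ≤ cnt B := by
  unfold cnt
  exact_mod_cast card_le_card (fun ω hω => by
    simp only [mem_filter, mem_univ, true_and] at hω ⊢; exact h hω)

lemma cnt_split (A B : Set (V → L)) : cnt A = cnt (A ∩ B) + cnt (A ∩ Bᶜ) := by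
  unfold cnt
  rw [← card_filter_add_card_filter_not (s := univ.filter fun ω => ω ∈ A) (fun ω => ω ∈ B)]
  push_cast
  simp [filter_filter]

lemma cnt_indep (S : Set V) (A B : Set (V → L)) (hA : DepOn S A) (hB : DepOn Sᶜ B) :
    cnt (A ∩ B) * cnt (Set.univ : Set (V → L)) = cnt A * cnt B := by
  unfold cnt
  norm_cast
  rw [← card_product, ← card_product]
  let m : (V → L) × (V → L) → (V → L) × (V → L) := fun p =>
    (fun v => if v ∈ S then p.1 v else p.2 v, fun v => if v ∈ S then p.2 v else p.1 v)
  have hm : ∀ p, m (m p) = p := by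
    intro p
    ext v <;> simp only [m] <;> split_ifs <;> rfl
  have h1 : ∀ p : (V → L) × (V → L), (m p).1 ∈ A ↔ p.1 ∈ A := fun p =>
    hA _ _ (fun v hv => by simp [m, hv])
  have h2 : ∀ p : (V → L) × (V → L), (m p).2 ∈ B ↔ p.1 ∈ B := fun p =>
    hB _ _ (fun v hv => by simp only [m]; rw [if_neg hv])
  refine card_bij' (fun p _ => m p) (fun p _ => m p) ?_ ?_ (fun p _ => hm p) (fun p _ => hm p)
  · intro p hp
    simp only [mem_product, mem_filter, mem_univ, true_and, Set.mem_inter_iff, h1, h2] at hp ⊢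
    exact hp.1
  · intro p hp
    have e1 := h1 (m p)
    have e2 := h2 (m p)
    rw [hm] at e1 e2
    simp only [mem_product, mem_filter, mem_univ, true_and, Set.mem_inter_iff, Set.mem_univ,
      and_true] at hp ⊢
    exact ⟨e1.1 hp.1, e2.1 hp.2⟩

/-- The labellings avoiding all bad events of `T`. -/
def avoid (B : V → Set (V → L)) (T : Finset V) : Set (V → L) := {ω | ∀ w ∈ T, ω ∉ B w}

lemma avoid_inter_bound (B : V → Set (V → L)) (T2 T1 : Finset V) :
    cnt (avoid B T2) ≤ cnt (avoid B (T1 ∪ T2)) + ∑ w ∈ T1, cnt (B w ∩ avoid B T2) := by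
  induction T1 using Finset.induction_on with
  | empty => simp
  | insert a T1 ha ih =>
    rw [sum_insert ha]
    have h := cnt_split (avoid B (T1 ∪ T2)) (B a)
    have h1 : cnt (avoid B (T1 ∪ T2) ∩ B a) ≤ cnt (B a ∩ avoid B T2) := by
      refine cnt_mono fun ω hω => ⟨hω.2, fun w hw => hω.1 w (mem_union_right _ hw)⟩
    have h2 : cnt (avoid B (T1 ∪ T2) ∩ (B a)ᶜ) ≤ cnt (avoid B (insert a T1 ∪ T2)) := by
      refine cnt_mono fun ω hω w hw => ?_
      rw [insert_union, mem_insert] at hw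
      rcases hw with rfl | hw
      · exact hω.2
      · exact hω.1 w hw
    linarith

lemma avoid_dep (B : V → Set (V → L)) (S : V → Set V) (hB : ∀ v, DepOn (S v) (B v))
    (T : Finset V) (U : Set V) (hU : ∀ w ∈ T, S w ⊆ U) : DepOn U (avoid B T) := by
  intro ω ω' h
  have : ∀ w ∈ T, (ω ∈ B w ↔ ω' ∈ B w) := fun w hw => hB w _ _ (fun v hv => h v (hU w hw hv))
  constructor
  · intro h1 w hw h2; exact h1 w hw ((this w hw).2 h2)
  · intro h1 w hw h2; exact h1 w hw ((this w hw).1 h2)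

theorem local_lemma [Nonempty L] (B : V → Set (V → L)) (S : V → Set V) (hB : ∀ v, DepOn (S v) (B v))
    (D : ℕ) (hD : ∀ v, (univ.filter fun w => ¬ Disjoint (S w) (S v)).card ≤ D)
    (p : ℝ) (hp : ∀ v, cnt (B v) ≤ p * cnt (Set.univ : Set (V → L)))
    (hpD : 4 * p * D ≤ 1) (hp4 : 4 * p ≤ 1) (hp0 : 0 ≤ p) : ∃ ω : V → L, ∀ v, ω ∉ B v := by
  have huniv : 0 < cnt (Set.univ : Set (V → L)) := by
    unfold cnt
    simp only [Set.mem_univ, filter_true, card_univ]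
    exact_mod_cast Fintype.card_pos
  have key : ∀ (n : ℕ) (T : Finset V), T.card ≤ n → ∀ v,
      cnt (B v ∩ avoid B T) ≤ 2 * p * cnt (avoid B T) := by
    intro n
    induction n with
    | zero =>
      intro T hT v
      have : T = ∅ := by simpa using hT
      subst this
      have e : avoid B ∅ = Set.univ := by ext; simp [avoid]
      rw [e, Set.inter_univ]
      have := hp v
      nlinarith
    | succ n ih =>
      intro T hT v
      set T1 := T.filter fun w => ¬ Disjoint (S w) (S v) with hT1
      set T2 := T.filter fun w => Disjoint (S w) (S v) with hT2
      have hun : T1 ∪ T2 = T := by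
        rw [union_comm]; exact filter_union_filter_not_eq _ _
      have hind : cnt (B v ∩ avoid B T2) ≤ p * cnt (avoid B T2) := by
        have h := cnt_indep (S v) (B v) (avoid B T2) (hB v)
          (avoid_dep B S hB T2 _ (fun w hw x hx hx' => by
            rw [hT2, mem_filter] at hw
            exact Set.disjoint_left.1 hw.2 hx hx'))
        have h2 := mul_le_mul_of_nonneg_right (hp v) (cnt_nonneg (avoid B T2))
        rw [← h] at h2
        have h3 : cnt (B v ∩ avoid B T2) * cnt (Set.univ : Set (V → L)) ≤
          (p * cnt (avoid B T2)) * cnt (Set.univ : Set (V → L)) := by nlinarith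
        exact le_of_mul_le_mul_right h3 huniv
      have hle : cnt (B v ∩ avoid B T) ≤ cnt (B v ∩ avoid B T2) := by
        refine cnt_mono fun ω hω => ⟨hω.1, fun w hw => hω.2 w ?_⟩
        rw [← hun]; exact mem_union_right _ hw
      have hhalf : cnt (avoid B T2) ≤ 2 * cnt (avoid B T) := by
        by_cases hemp : T1 = ∅
        · rw [hemp, empty_union] at hun
          rw [hun]
          linarith [cnt_nonneg (avoid B T)]
        · have hlt : T2.card ≤ n := by
            have h1 : T2.card + T1.card = T.card := by
              rw [hT1, hT2]; exact card_filter_add_card_filter_not _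
            have h2 : 0 < T1.card := card_pos.2 (nonempty_iff_ne_empty.2 hemp)
            omega
          have hb := avoid_inter_bound B T2 T1
          rw [hun] at hb
          have hs : ∑ w ∈ T1, cnt (B w ∩ avoid B T2) ≤ T1.card • (2 * p * cnt (avoid B T2)) :=
            sum_le_card_nsmul _ _ _ (fun w _ => ih T2 hlt w)
          rw [nsmul_eq_mul] at hs
          have hc : (T1.card : ℝ) ≤ D := by
            have : T1.card ≤ D := le_trans (card_le_card (by
              intro w hw; rw [hT1, mem_filter] at hw; simpa using hw.2)) (hD v)
            exact_mod_cast this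
          have h0 := cnt_nonneg (avoid B T2)
          have : (T1.card : ℝ) * (2 * p * cnt (avoid B T2)) ≤ D * (2 * p * cnt (avoid B T2)) :=
            mul_le_mul_of_nonneg_right hc (by positivity)
          nlinarith
      nlinarith [cnt_nonneg (avoid B T), cnt_nonneg (avoid B T2)]
  have pos : ∀ T : Finset V, 0 < cnt (avoid B T) := by
    intro T
    induction T using Finset.induction_on with
    | empty =>
      have e : avoid B ∅ = Set.univ := by ext; simp [avoid]
      rw [e]; exact huniv
    | insert a T ha ih =>
      have hb := avoid_inter_bound B T {a}
      rw [sum_singleton, ← insert_eq] at hb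
      have := key _ T le_rfl a
      nlinarith
  have := pos univ
  unfold cnt at this
  have h2 : 0 < (univ.filter fun ω => ω ∈ avoid B univ).card := by exact_mod_cast this
  obtain ⟨ω, hω⟩ := card_pos.1 h2
  simp only [mem_filter, mem_univ, true_and] at hω
  exact ⟨ω, fun v => hω v (mem_univ v)⟩

end LLL

/-! ### Concentration and the random labelling -/

section Conc
open Finset Classical

variable {V L : Type*} [Fintype V] [Fintype L]

lemma tail_bound (X : L → ℝ) (hX : ∀ l, |X l| ≤ 1) (h0 : ∑ l, X l = 0) (S : Finset V)
    (s t : ℝ) (hs0 : 0 ≤ s) (hs1 : s ≤ 1) :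
    cnt {ω : V → L | t < ∑ u ∈ S, X (ω u)} ≤
      Real.exp (s ^ 2 * S.card - s * t) * cnt (Set.univ : Set (V → L)) := by
  have hmgf1 : ∑ l : L, Real.exp (s * X l) ≤ (Fintype.card L : ℝ) * Real.exp (s ^ 2) := by
    have h1 : ∀ l : L, Real.exp (s * X l) ≤ 1 + s * X l + s ^ 2 := by
      intro l
      have ha : |s * X l| ≤ 1 := by
        rw [abs_mul, abs_of_nonneg hs0]
        nlinarith [hX l, abs_nonneg (X l)]
      have hb := Real.abs_exp_sub_one_sub_id_le ha
      have hc := (abs_le.1 hb).2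
      have hd : (X l) ^ 2 ≤ 1 := by
        rw [← sq_abs]; nlinarith [hX l, abs_nonneg (X l)]
      nlinarith [sq_nonneg s]
    calc ∑ l : L, Real.exp (s * X l) ≤ ∑ l : L, (1 + s * X l + s ^ 2) := sum_le_sum fun l _ => h1 l
      _ = (Fintype.card L : ℝ) * (s ^ 2 + 1) := by
        rw [sum_add_distrib, sum_add_distrib, ← mul_sum, h0]; simp; ring
      _ ≤ _ := mul_le_mul_of_nonneg_left (Real.add_one_le_exp _) (by positivity)
  let g : V → L → ℝ := fun u l => if u ∈ S then Real.exp (s * X l) else 1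
  have hprod : ∀ ω : V → L, Real.exp (s * ∑ u ∈ S, X (ω u)) = ∏ u, g u (ω u) := by
    intro ω
    simp only [g]
    rw [prod_ite_mem, univ_inter, mul_sum, Real.exp_sum]
  have hmgf : ∑ ω : V → L, Real.exp (s * ∑ u ∈ S, X (ω u)) ≤
      Real.exp (s ^ 2 * S.card) * cnt (Set.univ : Set (V → L)) := by
    have e1 : ∑ ω : V → L, Real.exp (s * ∑ u ∈ S, X (ω u)) = ∏ u, ∑ l, g u l := by
      rw [prod_univ_sum, Fintype.piFinset_univ]
      exact sum_congr rfl fun ω _ => hprod ω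
    have e2 : cnt (Set.univ : Set (V → L)) = ∏ _u : V, (Fintype.card L : ℝ) := by
      unfold cnt; simp
    have e3 : Real.exp (s ^ 2 * S.card) = ∏ u : V, if u ∈ S then Real.exp (s ^ 2) else 1 := by
      rw [prod_ite_mem, univ_inter, prod_const, ← Real.exp_nat_mul, mul_comm]
    rw [e1, e2, e3, ← prod_mul_distrib]
    refine prod_le_prod (fun u _ => sum_nonneg fun l _ => ?_) (fun u _ => ?_)
    · simp only [g]; split_ifs <;> positivity
    · simp only [g]
      split_ifs
      · linarith
      · simp
  have hmark : cnt {ω : V → L | t < ∑ u ∈ S, X (ω u)} * Real.exp (s * t) ≤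
      ∑ ω : V → L, Real.exp (s * ∑ u ∈ S, X (ω u)) := by
    unfold cnt
    rw [← nsmul_eq_mul]
    refine le_trans (card_nsmul_le_sum (univ.filter fun ω : V → L => ω ∈ {ω : V → L | t < ∑ u ∈ S, X (ω u)})
      (fun ω => Real.exp (s * ∑ u ∈ S, X (ω u))) _ ?_) ?_
    · intro ω hω
      simp only [mem_filter, mem_univ, true_and, Set.mem_ofPred_eq] at hω
      exact Real.exp_le_exp.2 (mul_le_mul_of_nonneg_left hω.le hs0)
    · exact sum_le_sum_of_subset_of_nonneg (filter_subset _ _) fun _ _ _ => (Real.exp_pos _).le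
  rw [Real.exp_sub, div_mul_eq_mul_div, le_div_iff₀ (Real.exp_pos _)]
  exact hmark.trans hmgf

lemma cnt_iUnion_le {ι : Type*} [Fintype ι] (A : ι → Set (V → L)) (p : ℝ)
    (h : ∀ i, cnt (A i) ≤ p) : cnt (⋃ i, A i) ≤ Fintype.card ι * p := by
  have h1 : cnt (⋃ i, A i) ≤ ∑ i, cnt (A i) := by
    unfold cnt
    have : (univ.filter fun ω => ω ∈ ⋃ i, A i) ⊆ univ.biUnion fun i => univ.filter fun ω => ω ∈ A i := by
      intro ω; simp
    exact_mod_cast (card_le_card this).trans card_biUnion_le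
  calc _ ≤ _ := h1
    _ ≤ ∑ _i : ι, p := sum_le_sum fun i _ => h i
    _ = _ := by simp

lemma exp_num (d : ℕ) (hd : 10 ^ 7 ≤ d) : 4 * (10000 * Real.exp (-(d : ℝ) / 160000)) * (d : ℝ) ^ 2 ≤ 1 := by
  have hd' : (10 : ℝ) ^ 7 ≤ d := by exact_mod_cast hd
  have h1 : (d : ℝ) / 10 ^ 7 ≤ Real.exp ((d : ℝ) / 10 ^ 7 - 1) := by
    have := Real.add_one_le_exp ((d : ℝ) / 10 ^ 7 - 1); linarith
  have h2 : ((d : ℝ) / 10 ^ 7) ^ 2 ≤ Real.exp ((d : ℝ) / 10 ^ 7 - 1) ^ 2 :=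
    pow_le_pow_left₀ (by positivity) h1 2
  rw [← Real.exp_nat_mul] at h2
  have h3 : (2 : ℝ) ^ 62 ≤ Real.exp 62 := by
    have h := pow_le_pow_left₀ (by norm_num) (Real.exp_one_gt_d9.le.trans' (by norm_num : (2 : ℝ) ≤ _)) 62
    rw [← Real.exp_nat_mul] at h
    norm_num at h ⊢
    exact h
  have h4 : Real.exp (-(d : ℝ) / 160000) * Real.exp (((2 : ℕ) : ℝ) * ((d : ℝ) / 10 ^ 7 - 1)) * Real.exp 62 ≤ 1 := by
    rw [← Real.exp_add, ← Real.exp_add, Real.exp_le_one_iff]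
    push_cast
    linarith
  have hE := Real.exp_pos (-(d : ℝ) / 160000)
  have h5 : Real.exp (-(d : ℝ) / 160000) * ((d : ℝ) / 10 ^ 7) ^ 2 * 2 ^ 62 ≤ 1 := by
    refine le_trans ?_ h4
    gcongr
  have h6 : Real.exp (-(d : ℝ) / 160000) * (d : ℝ) ^ 2 * (2 ^ 62 / 10 ^ 14) ≤ 1 := by
    refine le_trans (le_of_eq ?_) h5
    ring
  norm_num at h6
  nlinarith [mul_nonneg hE.le (sq_nonneg (d : ℝ))]

end Conc

section Labelling
open Finset Classical

theorem exists_labelling {V : Type*} [Fintype V] (nb : V → Finset V)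
    (hsymm : ∀ u v, u ∈ nb v → v ∈ nb u) (d : ℕ) (hd : 10 ^ 7 ≤ d) (hreg : ∀ v, (nb v).card = d)
    (N : ℕ) (hN : 0 < N) {ι : Type*} [Fintype ι] (hι : Fintype.card ι ≤ 5000)
    (C : ι → Finset (Fin N)) :
    ∃ ℓ : V → Fin N, ∀ v i,
      |(((nb v).filter fun u => ℓ u ∈ C i).card : ℝ) - (C i).card * ((d : ℝ) / N)| ≤ (d : ℝ) / 200 := by
  have : Nonempty (Fin N) := ⟨⟨0, hN⟩⟩
  have hN' : (0 : ℝ) < N := by exact_mod_cast hN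
  let X : ι → Fin N → ℝ := fun i l => (if l ∈ C i then 1 else 0) - (C i).card / N
  have hfrac : ∀ i, (0 : ℝ) ≤ (C i).card / N ∧ ((C i).card / N : ℝ) ≤ 1 := by
    intro i
    refine ⟨by positivity, ?_⟩
    rw [div_le_one hN']
    have := card_le_univ (C i)
    rw [Fintype.card_fin] at this
    exact_mod_cast this
  have hX : ∀ i l, |X i l| ≤ 1 := by
    intro i l
    have := hfrac i
    simp only [X]
    rw [abs_le]
    split_ifs <;> constructor <;> linarith [this.1, this.2]
  have hX0 : ∀ i, ∑ l, X i l = 0 := by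
    intro i
    simp only [X, sum_sub_distrib]
    simp
    field_simp
    simp
  have hsum : ∀ i v (ω : V → Fin N), ∑ u ∈ nb v, X i (ω u) =
      (((nb v).filter fun u => ω u ∈ C i).card : ℝ) - (C i).card * ((d : ℝ) / N) := by
    intro i v ω
    simp only [X, sum_sub_distrib, sum_const, hreg v, nsmul_eq_mul, card_filter]
    push_cast
    ring
  let B : V → Set (V → Fin N) := fun v => ⋃ q : ι × Bool,
    {ω | (d : ℝ) / 200 < ∑ u ∈ nb v, (if q.2 then X q.1 (ω u) else - X q.1 (ω u))}
  have hB : ∀ v, cnt (B v) ≤ (10000 * Real.exp (-(d : ℝ) / 160000)) *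
      cnt (Set.univ : Set (V → Fin N)) := by
    intro v
    have hone : ∀ q : ι × Bool, cnt {ω : V → Fin N | (d : ℝ) / 200 <
        ∑ u ∈ nb v, (if q.2 then X q.1 (ω u) else - X q.1 (ω u))} ≤
        Real.exp (-(d : ℝ) / 160000) * cnt (Set.univ : Set (V → Fin N)) := by
      rintro ⟨i, b⟩
      have h := tail_bound (fun l => if b then X i l else - X i l) (by
          intro l; cases b
          · simpa using hX i l
          · simpa using hX i l) (by
          cases b
          · simpa using hX0 i
          · simpa using hX0 i) (nb v) (1 / 400) ((d : ℝ) / 200) (by norm_num) (by norm_num)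
      rw [hreg v] at h
      have e : (1 / 400 : ℝ) ^ 2 * d - 1 / 400 * ((d : ℝ) / 200) = -(d : ℝ) / 160000 := by ring
      rw [e] at h
      exact h
    have h := cnt_iUnion_le _ _ hone
    refine h.trans ?_
    rw [← mul_assoc]
    refine mul_le_mul_of_nonneg_right ?_ (cnt_nonneg _)
    refine mul_le_mul_of_nonneg_right ?_ (Real.exp_pos _).le
    rw [Fintype.card_prod, Fintype.card_bool]
    have : ((Fintype.card ι * 2 : ℕ) : ℝ) ≤ (10000 : ℕ) := by
      exact_mod_cast (by omega : Fintype.card ι * 2 ≤ 10000)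
    simpa using this
  have hnum := exp_num d hd
  have hd1 : (1 : ℝ) ≤ (d : ℝ) ^ 2 := by
    have : (1 : ℝ) ≤ d := by exact_mod_cast (le_trans (by norm_num) hd)
    nlinarith
  have hE := Real.exp_pos (-(d : ℝ) / 160000)
  obtain ⟨ℓ, hℓ⟩ := local_lemma B (fun v => (nb v : Set V)) (by
      intro v ω ω' h
      simp only [B, Set.mem_iUnion, Set.mem_ofPred_eq]
      refine exists_congr fun q => ?_
      have : ∑ u ∈ nb v, (if q.2 then X q.1 (ω u) else - X q.1 (ω u)) =
          ∑ u ∈ nb v, (if q.2 then X q.1 (ω' u) else - X q.1 (ω' u)) :=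
        sum_congr rfl fun u hu => by rw [h u (mem_coe.2 hu)]
      rw [this]) (d ^ 2) (by
      intro v
      have hsub : (univ.filter fun w => ¬ Disjoint ((nb w : Set V)) (nb v : Set V)) ⊆
          (nb v).biUnion fun u => nb u := by
        intro w hw
        simp only [mem_filter, mem_univ, true_and, Set.not_disjoint_iff, mem_coe] at hw
        obtain ⟨x, hx, hx'⟩ := hw
        exact mem_biUnion.2 ⟨x, hx', hsymm _ _ hx⟩
      refine (card_le_card hsub).trans (card_biUnion_le.trans ?_)
      rw [sum_congr rfl fun u _ => hreg u, sum_const, hreg v, smul_eq_mul, sq]) _ hB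
      (by push_cast; exact hnum) (by nlinarith) (by positivity)
  refine ⟨ℓ, fun v i => ?_⟩
  have hv := hℓ v
  simp only [B, Set.mem_iUnion, Set.mem_ofPred_eq, not_exists, not_lt] at hv
  rw [← hsum, abs_le]
  have h1 := hv (i, true)
  have h2 := hv (i, false)
  simp only [if_true, Bool.false_eq_true, if_false, sum_neg_distrib] at h1 h2
  constructor <;> linarith

end Labelling

/-! ### The deterministic part -/

section Det
open Finset Classical

lemma exists_greedy {V : Type*} [Fintype V] (soft : V → Finset V)
    (hirr : ∀ v, v ∉ soft v) (hsymm : ∀ u v, u ∈ soft v → v ∈ soft u)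
    (base K : V → ℕ) (hK : ∀ v, (soft v).card ≤ K v) :
    ∃ x : V → ℕ, (∀ v, x v ≤ K v) ∧ ∀ u v, u ∈ soft v → base u + x u ≠ base v + x v := by
  have main : ∀ T : Finset V, ∃ x : V → ℕ, (∀ v, x v ≤ K v) ∧
      ∀ u ∈ T, ∀ v ∈ T, u ∈ soft v → base u + x u ≠ base v + x v := by
    intro T
    induction T using Finset.induction_on with
    | empty => exact ⟨fun _ => 0, fun v => Nat.zero_le _, by simp⟩
    | insert a T ha ih =>
      obtain ⟨x, hx, hprop⟩ := ih
      obtain ⟨y, hy, hy'⟩ : ∃ y ∈ range (K a + 1),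
          y ∉ (soft a).image (fun u => base u + x u - base a) := by
        apply exists_mem_notMem_of_card_lt_card
        rw [card_range]
        exact lt_of_le_of_lt card_image_le (Nat.lt_succ_of_le (hK a))
      have hya : ∀ u ∈ soft a, base u + x u ≠ base a + y := by
        intro u hu h
        exact hy' (mem_image.2 ⟨u, hu, by omega⟩)
      refine ⟨Function.update x a y, fun v => ?_, fun u hu v hv huv => ?_⟩
      · by_cases h : v = a
        · subst h
          rw [Function.update_self]
          have := mem_range.1 hy
          omega
        · rw [Function.update_of_ne h]; exact hx v
      · by_cases h1 : u = a
        · subst h1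
          by_cases h2 : v = u
          · subst h2; exact absurd huv (hirr v)
          · rw [Function.update_self, Function.update_of_ne h2]
            exact (hya v (hsymm _ _ huv)).symm
        · by_cases h2 : v = a
          · subst h2
            rw [Function.update_self, Function.update_of_ne h1]
            exact hya u huv
          · rw [Function.update_of_ne h1, Function.update_of_ne h2]
            exact hprop u (mem_of_mem_insert_of_ne hu h1) v (mem_of_mem_insert_of_ne hv h2) huv
  obtain ⟨x, hx, h⟩ := main univ
  exact ⟨x, hx, fun u v => h u (mem_univ u) v (mem_univ v)⟩

variable {V : Type*}

/-- The colour of the edge `uv`, given the labels `ℓ` and the sets `X u` of neighbours to which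
`u` has given its fine colour. -/
noncomputable def col (ℓ : V → Fin 42) (X : V → Finset V) (u v : V) : ℕ :=
  if role (ℓ u) (ℓ v) = 3 then fine (ℓ u)
  else if role (ℓ u) (ℓ v) = 4 then
    (if v ∈ X u then fine (ℓ u) else 3 - fine (ℓ u) - fine (ℓ v))
  else if role (ℓ u) (ℓ v) = 5 then
    (if u ∈ X v then fine (ℓ v) else 3 - fine (ℓ u) - fine (ℓ v))
  else role (ℓ u) (ℓ v)

lemma fine_lt (c : Fin 42) : fine c < 3 := Nat.mod_lt _ (by norm_num)

lemma role_ctl' (c c' : Fin 42) (h : role c c' = 5) : fine c ≠ fine c' := by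
  have := role_symm c c'
  rw [h] at this
  exact (role_ctl c' c (by simpa using this)).symm

lemma col_symm (ℓ : V → Fin 42) (X : V → Finset V) (u v : V) : col ℓ X u v = col ℓ X v u := by
  have hr := role_symm (ℓ u) (ℓ v)
  have hs := role_soft (ℓ u) (ℓ v)
  have hc : 3 - fine (ℓ u) - fine (ℓ v) = 3 - fine (ℓ v) - fine (ℓ u) := by omega
  unfold col
  rw [hr]
  by_cases h3 : role (ℓ u) (ℓ v) = 3
  · simp [h3, hs h3]
  · by_cases h4 : role (ℓ u) (ℓ v) = 4
    · simp [h4, hc]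
    · by_cases h5 : role (ℓ u) (ℓ v) = 5
      · simp [h5, hc]
      · simp [h3, h4, h5]

lemma col_lt (ℓ : V → Fin 42) (X : V → Finset V) (u v : V) : col ℓ X u v < 3 := by
  have h1 := fine_lt (ℓ u)
  have h2 := fine_lt (ℓ v)
  have h3 := role_ctl (ℓ u) (ℓ v)
  have h4 := role_ctl' (ℓ u) (ℓ v)
  have h5 := role_lt (ℓ u) (ℓ v)
  unfold col
  split_ifs <;> omega

lemma col_of_must (ℓ : V → Fin 42) (X : V → Finset V) (u v : V) (i : ℕ)
    (h : must (ℓ u) (ℓ v) i = true) : col ℓ X u v = i := by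
  unfold must at h
  simp only [Bool.or_eq_true, Bool.and_eq_true, beq_iff_eq, decide_eq_true_eq] at h
  unfold col
  rcases h with ⟨h, hi⟩ | ⟨h, hi⟩
  · rw [if_neg (by omega), if_neg (by omega), if_neg (by omega), h]
  · rw [if_pos h, hi]

lemma poss_of_col (ℓ : V → Fin 42) (X : V → Finset V) (u v : V) (h3 : role (ℓ u) (ℓ v) ≠ 3) :
    poss (ℓ u) (ℓ v) (col ℓ X u v) = true := by
  have hlt := role_lt (ℓ u) (ℓ v)
  unfold poss col
  simp only [Bool.or_eq_true, Bool.and_eq_true, beq_iff_eq, decide_eq_true_eq, if_neg h3]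
  by_cases h4 : role (ℓ u) (ℓ v) = 4
  · simp only [h4, if_true]
    split_ifs <;> simp
  · by_cases h5 : role (ℓ u) (ℓ v) = 5
    · simp only [h5]
      split_ifs <;> simp_all
    · simp only [h4, h5, if_false]
      left; left; exact ⟨trivial, by omega⟩

lemma must_or_poss (ℓ : V → Fin 42) (X : V → Finset V) (u v : V) :
    (must (ℓ u) (ℓ v) (col ℓ X u v) || poss (ℓ u) (ℓ v) (col ℓ X u v)) = true := by
  by_cases h3 : role (ℓ u) (ℓ v) = 3
  · simp [must, col, h3]
  · simp [poss_of_col ℓ X u v h3]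

lemma col_fine_iff (ℓ : V → Fin 42) (X : V → Finset V) (u v : V)
    (hX : v ∈ X u → role (ℓ u) (ℓ v) = 4) :
    col ℓ X u v = fine (ℓ u) ↔ must (ℓ u) (ℓ v) (fine (ℓ u)) = true ∨ v ∈ X u := by
  constructor
  · intro h
    by_contra hcon
    push Not at hcon
    obtain ⟨hm, hx⟩ := hcon
    have h1 := fine_lt (ℓ u)
    have h2 := fine_lt (ℓ v)
    have h3 := role_ctl (ℓ u) (ℓ v)
    have h4 := role_ctl' (ℓ u) (ℓ v)
    simp only [must, ne_eq, Bool.or_eq_true, Bool.and_eq_true, beq_iff_eq, decide_eq_true_eq,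
      not_or, not_and] at hm
    unfold col at h
    split_ifs at h with a b c e <;> first | omega | skip
    · exact hm.2 a trivial
  · rintro (h | h)
    · exact col_of_must ℓ X u v _ h
    · unfold col
      rw [if_neg (by have := hX h; omega), if_pos (hX h), if_pos h]

lemma edgeDeg_eq [Fintype V] (G : SimpleGraph V) [DecidableRel G.Adj] (c : Sym2 V → Fin 3)
    (i : Fin 3) (v : V) : edgeDeg {e | e ∈ G.edgeSet ∧ c e = i} v =
      ((G.neighborFinset v).filter fun u => c s(v, u) = i).card := by
  unfold edgeDeg
  rw [← Set.ncard_coe_finset]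
  have hinj : Function.Injective (fun u : V => s(v, u)) := fun a b h => Sym2.congr_right.1 h
  rw [← Set.ncard_image_of_injective _ hinj]
  congr 1
  ext e
  simp only [Set.mem_ofPred_eq, Set.mem_image, mem_coe, mem_filter, SimpleGraph.mem_neighborFinset]
  constructor
  · rintro ⟨⟨he, hc⟩, hv⟩
    obtain ⟨u, rfl⟩ := hv
    exact ⟨u, ⟨by simpa using he, hc⟩, rfl⟩
  · rintro ⟨u, ⟨hadj, hc⟩, rfl⟩
    exact ⟨⟨by simpa using hadj, hc⟩, by simp⟩

end Det

end LocIrr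

open Finset Classical LocIrr in
/-- Every `d`-regular finite simple graph with `d ≥ 10^7` is decomposable into
3 locally irregular subgraphs (auxiliary form). -/
theorem LocIrr.main_aux
    {V : Type*} [Fintype V] (G : SimpleGraph V) [DecidableRel G.Adj]
    (d : ℕ) (hd : 10^7 ≤ d) (hreg : G.IsRegularOfDegree d) :
    ∃ c : Sym2 V → Fin 3,
      ∀ i : Fin 3, LocallyIrregular {e | e ∈ G.edgeSet ∧ c e = i} := by
  have hdpos : (0 : ℝ) < d := by
    have : 0 < d := lt_of_lt_of_le (by norm_num) hd
    exact_mod_cast this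
  -- the random labelling
  obtain ⟨ℓ, hℓ⟩ := exists_labelling (fun v => G.neighborFinset v)
    (fun u v h => by
      rw [SimpleGraph.mem_neighborFinset] at h ⊢; exact h.symm) d hd
    (fun v => by rw [SimpleGraph.card_neighborFinset_eq_degree]; exact hreg v) 42 (by norm_num)
    (ι := Fin 42 × (Fin 3 ⊕ Fin 3 ⊕ Bool)) (by simp)
    (fun q => match q.2 with
      | Sum.inl i => loSet q.1 i
      | Sum.inr (Sum.inl i) => hiSet q.1 i
      | Sum.inr (Sum.inr true) => softSet q.1
      | Sum.inr (Sum.inr false) => ctlSet q.1)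
  let soft : V → Finset V := fun v => (G.neighborFinset v).filter fun u => ℓ u ∈ softSet (ℓ v)
  let ctl : V → Finset V := fun v => (G.neighborFinset v).filter fun u => ℓ u ∈ ctlSet (ℓ v)
  let base : V → ℕ := fun v =>
    ((G.neighborFinset v).filter fun u => ℓ u ∈ loSet (ℓ v) (fine (ℓ v))).card
  have hsoft : ∀ v, (soft v).card ≤ (ctl v).card := by
    intro v
    have h1 := (abs_le.1 (hℓ v (ℓ v, Sum.inr (Sum.inr true)))).2
    have h2 := (abs_le.1 (hℓ v (ℓ v, Sum.inr (Sum.inr false)))).1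
    have h3 : ((softSet (ℓ v)).card : ℝ) + 1 ≤ (ctlSet (ℓ v)).card := by
      exact_mod_cast soft_ctl_card (ℓ v)
    have h4 : ((soft v).card : ℝ) ≤ (ctl v).card := by
      simp only [soft, ctl]
      simp only at h1 h2
      have h5 := mul_le_mul_of_nonneg_right h3 (by positivity : (0 : ℝ) ≤ (d : ℝ) / (42 : ℕ))
      push_cast at h1 h2 h5
      linarith
    exact_mod_cast h4
  obtain ⟨x, hx, hprop⟩ := exists_greedy soft (fun v h => by simp [soft] at h)
    (fun u v h => by
      simp only [soft, softSet, mem_filter, SimpleGraph.mem_neighborFinset, mem_univ, true_and] at h ⊢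
      refine ⟨h.1.symm, ?_⟩
      rw [role_symm, h.2]; norm_num) base (fun v => (ctl v).card) hsoft
  choose X hXsub hXcard using fun v => exists_subset_card_eq (hx v)
  have hXrole : ∀ u v, v ∈ X u → role (ℓ u) (ℓ v) = 4 := by
    intro u v h
    have := hXsub u h
    simpa [ctl, ctlSet] using (mem_filter.1 this).2
  let c : Sym2 V → Fin 3 := Sym2.lift ⟨fun u v => ⟨col ℓ X u v, col_lt ℓ X u v⟩, fun u v => by
    simp only [col_symm ℓ X u v]⟩
  have hc : ∀ u v (i : Fin 3), c s(u, v) = i ↔ col ℓ X u v = i := by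
    intro u v i
    simp [c, Sym2.lift_mk, Fin.ext_iff]
  refine ⟨c, fun i v w hvw => ?_⟩
  obtain ⟨hadj, hcol⟩ := hvw
  rw [SimpleGraph.mem_edgeSet] at hadj
  rw [hc] at hcol
  rw [edgeDeg_eq, edgeDeg_eq]
  simp only [hc]
  by_cases h3 : role (ℓ v) (ℓ w) = 3
  · -- soft edge
    have hdeg : ∀ u, fine (ℓ u) = i →
        ((G.neighborFinset u).filter fun y => col ℓ X u y = i).card = base u + x u := by
      intro u hu
      rw [← hXcard u, ← hu]
      simp only [base]
      rw [← card_union_of_disjoint]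
      · congr 1
        ext y
        simp only [mem_filter, mem_union, col_fine_iff ℓ X u y (hXrole u y), loSet, mem_univ, true_and]
        constructor
        · rintro ⟨h, h' | h'⟩
          · exact Or.inl ⟨h, h'⟩
          · exact Or.inr h'
        · rintro (h | h)
          · exact ⟨h.1, Or.inl h.2⟩
          · exact ⟨(mem_filter.1 (hXsub u h)).1, Or.inr h⟩
      · rw [disjoint_left]
        intro y hy hy'
        have hr := hXrole u y hy'
        have hlt := fine_lt (ℓ u)
        have hm := (mem_filter.1 (mem_filter.1 hy).2).2
        simp [must, hr] at hm
        omega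
    have hcv : fine (ℓ v) = i := by rw [← hcol, col, if_pos h3]
    have hcw : fine (ℓ w) = i := by rw [← role_soft _ _ h3, hcv]
    rw [hdeg v hcv, hdeg w hcw]
    apply hprop
    simp only [soft, softSet, mem_filter, SimpleGraph.mem_neighborFinset, mem_univ, true_and]
    refine ⟨hadj.symm, ?_⟩
    rw [role_symm, h3]; norm_num
  · -- separated edge
    have hp := poss_of_col ℓ X v w h3
    rw [hcol] at hp
    have hlo : ∀ u, (loTab (ℓ u) i : ℝ) * ((d : ℝ) / (42 : ℕ)) - d / 200 ≤
        (((G.neighborFinset u).filter fun y => col ℓ X u y = i).card : ℝ) := by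
      intro u
      have h := (abs_le.1 (hℓ u (ℓ u, Sum.inl i))).1
      simp only [loSet_card] at h
      have hsub : ((G.neighborFinset u).filter fun y => ℓ y ∈ loSet (ℓ u) i).card ≤
          ((G.neighborFinset u).filter fun y => col ℓ X u y = i).card := by
        refine card_le_card fun y hy => ?_
        simp only [mem_filter, loSet, mem_univ, true_and] at hy ⊢
        exact ⟨hy.1, col_of_must ℓ X u y _ hy.2⟩
      have hsub' : (((G.neighborFinset u).filter fun y => ℓ y ∈ loSet (ℓ u) i).card : ℝ) ≤
          (((G.neighborFinset u).filter fun y => col ℓ X u y = i).card : ℝ) := by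
        exact_mod_cast hsub
      linarith
    have hhi : ∀ u, (((G.neighborFinset u).filter fun y => col ℓ X u y = i).card : ℝ) ≤
        (hiTab (ℓ u) i : ℝ) * ((d : ℝ) / (42 : ℕ)) + d / 200 := by
      intro u
      have h := (abs_le.1 (hℓ u (ℓ u, Sum.inr (Sum.inl i)))).2
      simp only [hiSet_card] at h
      have hsub : ((G.neighborFinset u).filter fun y => col ℓ X u y = i).card ≤
          ((G.neighborFinset u).filter fun y => ℓ y ∈ hiSet (ℓ u) i).card := by
        refine card_le_card fun y hy => ?_
        simp only [mem_filter, hiSet, mem_univ, true_and] at hy ⊢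
        refine ⟨hy.1, ?_⟩
        rw [← hy.2]
        exact must_or_poss ℓ X u y
      have hsub' : (((G.neighborFinset u).filter fun y => col ℓ X u y = i).card : ℝ) ≤
          (((G.neighborFinset u).filter fun y => ℓ y ∈ hiSet (ℓ u) i).card : ℝ) := by
        exact_mod_cast hsub
      linarith
    have sep : ∀ a b : V, hiTab (ℓ a) i + 1 ≤ loTab (ℓ b) i →
        (((G.neighborFinset a).filter fun y => col ℓ X a y = i).card : ℝ) <
        (((G.neighborFinset b).filter fun y => col ℓ X b y = i).card : ℝ) := by
      intro a b hab
      have hab' : (hiTab (ℓ a) i : ℝ) + 1 ≤ loTab (ℓ b) i := by exact_mod_cast hab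
      have h5 := mul_le_mul_of_nonneg_right hab' (by positivity : (0 : ℝ) ≤ (d : ℝ) / (42 : ℕ))
      have ha := hhi a
      have hb := hlo b
      push_cast at ha hb h5
      linarith
    intro heq
    have heq' : (((G.neighborFinset v).filter fun y => col ℓ X v y = i).card : ℝ) =
        (((G.neighborFinset w).filter fun y => col ℓ X w y = i).card : ℝ) := by
      exact_mod_cast congrArg (Nat.cast (R := ℝ)) heq
    rcases poss_sep (ℓ v) (ℓ w) i hp with h | h
    · have := sep v w h; linarith
    · have := sep w v h; linarith

/-- Every `d`-regular finite simple graph with `d ≥ 10^7` is decomposable into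
3 locally irregular subgraphs. -/
theorem regular_decomposable_three_locally_irregular
    {V : Type*} [Fintype V] (G : SimpleGraph V) [DecidableRel G.Adj]
    (d : ℕ) (hd : 10^7 ≤ d) (hreg : G.IsRegularOfDegree d) :
    ∃ c : Sym2 V → Fin 3,
      ∀ i : Fin 3, LocallyIrregular {e | e ∈ G.edgeSet ∧ c e = i} :=
  LocIrr.main_aux G d hd hreg
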